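/- Every quasi-isomorphism between minimal Sullivan algebras is an isomorphism of cdga's. -/

import Mathlib

/-! # Core definitions for rational homotopy theory via Sullivan models -/

noncomputable section

open scoped TensorProduct

/-- A commutative (in the graded sense) differential graded algebra over `ℚ`,
presented as a `ℤ`-graded algebra: a ring together with an internal grading by
`ℚ`-subspaces, graded commutativity with Koszul signs, and a degree `+1`
differential which is a derivation and squares to zero. -/
structure CDGA : Type 1 where
  carrier : Type
  [ring : Ring carrier]
  [algebra : Algebra ℚ carrier]
  grading : ℤ → Submodule ℚ carrier
  spanning : (⨆ i, grading i) = ⊤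
  indep : ∀ f : ℤ →₀ carrier, (∀ i, f i ∈ grading i) → (f.sum fun _ x => x) = 0 → f = 0
  one_mem : (1 : carrier) ∈ grading 0
  mul_mem : ∀ {i j : ℤ} {a b : carrier}, a ∈ grading i → b ∈ grading j → a * b ∈ grading (i + j)
  gcomm : ∀ {i j : ℤ} {a b : carrier}, a ∈ grading i → b ∈ grading j →
    a * b = ((-1 : ℚ) ^ (i * j)) • (b * a)
  d : carrier →ₗ[ℚ] carrier
  d_mem : ∀ {i : ℤ} {a : carrier}, a ∈ grading i → d a ∈ grading (i + 1)
  d_sq : ∀ a, d (d a) = 0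
  leibniz : ∀ {i : ℤ} {a : carrier}, a ∈ grading i → ∀ b : carrier,
    d (a * b) = d a * b + ((-1 : ℚ) ^ i) • (a * d b)

attribute [instance] CDGA.ring CDGA.algebra

namespace CDGA

/-- A morphism of cdga's: a ring homomorphism which is `ℚ`-linear, preserves the
grading and commutes with the differentials. -/
structure Hom (A B : CDGA) where
  toFun : A.carrier →+* B.carrier
  map_smul : ∀ (q : ℚ) (x : A.carrier), toFun (q • x) = q • toFun x
  map_grading : ∀ i : ℤ, ∀ x ∈ A.grading i, toFun x ∈ B.grading i
  map_d : ∀ x, toFun (A.d x) = B.d (toFun x)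

def Hom.id (A : CDGA) : Hom A A :=
  ⟨RingHom.id _, fun _ _ => rfl, fun _ _ h => h, fun _ => rfl⟩

def Hom.comp {A B C : CDGA} (g : Hom B C) (f : Hom A B) : Hom A C where
  toFun := g.toFun.comp f.toFun
  map_smul q x := by simp [RingHom.comp_apply, f.map_smul, g.map_smul]
  map_grading i x hx := g.map_grading i _ (f.map_grading i x hx)
  map_d x := by simp [RingHom.comp_apply, f.map_d, g.map_d]

/-- An isomorphism of cdga's. -/
def IsIso {A B : CDGA} (f : Hom A B) : Prop :=
  ∃ g : Hom B A, (∀ x, g.toFun (f.toFun x) = x) ∧ ∀ y, f.toFun (g.toFun y) = y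

def cocycles (A : CDGA) (n : ℤ) : Submodule ℚ A.carrier :=
  A.grading n ⊓ LinearMap.ker A.d

def cobounds (A : CDGA) (n : ℤ) : Submodule ℚ A.carrier :=
  A.grading n ⊓ LinearMap.range A.d

/-- The `n`-th cohomology of a cdga, as a `ℚ`-vector space. -/
def H (A : CDGA) (n : ℤ) : Type :=
  A.cocycles n ⧸ ((A.cobounds n).comap (A.cocycles n).subtype)

instance (A : CDGA) (n : ℤ) : AddCommGroup (A.H n) :=
  inferInstanceAs (AddCommGroup (_ ⧸ _))

instance (A : CDGA) (n : ℤ) : Module ℚ (A.H n) :=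
  inferInstanceAs (Module ℚ (_ ⧸ _))

/-- A quasi-isomorphism: a morphism inducing an isomorphism in cohomology
(expressed at the level of cocycles and coboundaries). -/
def QuasiIso {A B : CDGA} (f : Hom A B) : Prop :=
  (∀ n : ℤ, ∀ a ∈ A.cocycles n, f.toFun a ∈ B.cobounds n → a ∈ A.cobounds n) ∧
  ∀ n : ℤ, ∀ b ∈ B.cocycles n, ∃ a ∈ A.cocycles n, b - f.toFun a ∈ B.cobounds n

/-- `H⁰(A) = ℚ`. -/
def HZeroIsQ (A : CDGA) : Prop :=
  (∀ a ∈ A.cocycles 0, ∃ q : ℚ, a - q • (1 : A.carrier) ∈ A.cobounds 0) ∧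
  (1 : A.carrier) ∉ A.cobounds 0

/-- The cylinder `∧(t,dt) ⊗ A` on a cdga `A`, characterized (up to isomorphism)
as a cdga containing `A` and an element `t` of degree `0` such that the whole
algebra is a free `A`-module on the monomials `tᵏ` and `tᵏ·dt`, together with
the two augmentations `ε₀, ε₁` evaluating `t` at `0` and `1`.  -/
structure Cylinder (A : CDGA) where
  C : CDGA
  ι : Hom A C
  t : C.carrier
  t_mem : t ∈ C.grading 0
  ε₀ : Hom C A
  ε₁ : Hom C A
  ε₀_ι : ∀ a, ε₀.toFun (ι.toFun a) = a
  ε₁_ι : ∀ a, ε₁.toFun (ι.toFun a) = a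
  ε₀_t : ε₀.toFun t = 0
  ε₁_t : ε₁.toFun t = 1
  basis : ∀ c : C.carrier, ∃! pq : (ℕ →₀ A.carrier) × (ℕ →₀ A.carrier),
    c = (pq.1.sum fun k a => ι.toFun a * t ^ k) +
        pq.2.sum fun k a => ι.toFun a * t ^ k * C.d t
  grading_compat : ∀ (n : ℤ) (p q : ℕ →₀ A.carrier),
    (∀ k, p k ∈ A.grading n) → (∀ k, q k ∈ A.grading (n - 1)) →
    ((p.sum fun k a => ι.toFun a * t ^ k) +
      q.sum fun k a => ι.toFun a * t ^ k * C.d t) ∈ C.grading n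

/-- Sullivan's notion of homotopy of cdga morphisms: `f ∼ g` iff there is a
morphism into the cylinder `∧(t,dt) ⊗ A` restricting to `f` at `t = 0` and to
`g` at `t = 1`. -/
def Homotopic {S A : CDGA} (f g : Hom S A) : Prop :=
  ∃ (cy : Cylinder A) (Φ : Hom S cy.C),
    (∀ x, cy.ε₀.toFun (Φ.toFun x) = f.toFun x) ∧ ∀ x, cy.ε₁.toFun (Φ.toFun x) = g.toFun x

def QIso (A B : CDGA) : Prop := ∃ f : Hom A B, QuasiIso f

/-- Weak equivalence of cdga's: a zig-zag of quasi-isomorphisms. -/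
def WeakEq : CDGA → CDGA → Prop := Relation.EqvGen QIso

end CDGA

/-- A Sullivan algebra `(∧V, d)`: a cdga which is free as a graded-commutative
algebra on a graded subspace `V = {V^k}_{k ≥ 1}` (expressed by the universal
property of extending degreewise linear maps on `V` uniquely to graded algebra
morphisms), together with an increasing filtration `V(0) ⊆ V(1) ⊆ ⋯` of `V`
with `d (V(0)) = 0` and `d(V(r+1)) ⊆ ∧V(r)`. -/
structure SullivanAlgebra extends CDGA where
  V : ℤ → Submodule ℚ carrier
  V_le : ∀ k, V k ≤ grading k
  V_nonpos : ∀ k ≤ 0, V k = ⊥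
  gen : Algebra.adjoin ℚ (((⨆ k, V k) : Submodule ℚ carrier) : Set carrier) = ⊤
  free : ∀ (B : CDGA) (f : ∀ k : ℤ, (V k) →ₗ[ℚ] B.carrier),
    (∀ (k : ℤ) (v : V k), f k v ∈ B.grading k) →
    ∃! φ : carrier →+* B.carrier,
      (∀ (q : ℚ) (x : carrier), φ (q • x) = q • φ x) ∧
      (∀ i : ℤ, ∀ x ∈ grading i, φ x ∈ B.grading i) ∧
      ∀ (k : ℤ) (v : V k), φ v = f k v
  filt : ℕ → Submodule ℚ carrier
  filt_le : ∀ r, filt r ≤ ⨆ k, V k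
  filt_mono : Monotone filt
  filt_exhausts : (⨆ k, V k) ≤ ⨆ r, filt r
  d_filt_zero : ∀ x ∈ filt 0, d x = 0
  d_filt_succ : ∀ r : ℕ, ∀ x ∈ filt (r + 1), d x ∈ Algebra.adjoin ℚ ((filt r : Set carrier))

namespace SullivanAlgebra

def Vtot (S : SullivanAlgebra) : Submodule ℚ S.carrier := ⨆ k, S.V k

/-- `∧^{≥ m} V`: the span of the products of at least `m` elements of `V`. -/
def wedge (S : SullivanAlgebra) (m : ℕ) : Submodule ℚ S.carrier :=
  S.Vtot ^ m * ⊤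

end SullivanAlgebra

/-- A minimal Sullivan algebra: `d(V) ⊆ ∧^{≥2} V`. -/
structure MinimalSullivanAlgebra extends SullivanAlgebra where
  minimal : ∀ x ∈ toSullivanAlgebra.Vtot, d x ∈ toSullivanAlgebra.wedge 2
/-! ### Singular cohomology and homology with rational coefficients -/

/-- The standard topological `n`-simplex. -/
def SSimplex (n : ℕ) : Type :=
  {f : Fin (n + 1) → ℝ // (∀ i, 0 ≤ f i) ∧ ∑ i, f i = 1}

instance (n : ℕ) : TopologicalSpace (SSimplex n) := by
  unfold SSimplex; infer_instance

/-- The `i`-th face inclusion of standard simplices. -/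
def SSimplex.face {n : ℕ} (i : Fin (n + 2)) : C(SSimplex n, SSimplex (n + 1)) where
  toFun f := ⟨fun j => ∑ k : Fin (n + 1), if i.succAbove k = j then f.1 k else 0, by
    constructor
    · intro j
      refine Finset.sum_nonneg fun k _ => ?_
      split
      · exact f.2.1 k
      · exact le_rfl
    · rw [Finset.sum_comm]
      have h : ∀ k : Fin (n + 1),
          (∑ j : Fin (n + 2), if i.succAbove k = j then f.1 k else 0) = f.1 k := by
        intro k
        simp [Finset.sum_ite_eq]
      rw [Finset.sum_congr rfl fun k _ => h k]
      exact f.2.2⟩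
  continuous_toFun := by
    apply Continuous.subtype_mk
    apply continuous_pi
    intro j
    apply continuous_finset_sum
    intro k _
    by_cases h : i.succAbove k = j
    · simp only [if_pos h]
      exact (continuous_apply k).comp continuous_subtype_val
    · simpa [h] using continuous_const

/-- Singular simplices in `X`. -/
abbrev SingularSimplex (X : Type) [TopologicalSpace X] (n : ℕ) := C(SSimplex n, X)

/-- Rational singular cochains. -/
abbrev scochain (X : Type) [TopologicalSpace X] (n : ℕ) : Type :=
  SingularSimplex X n → ℚ

/-- The singular coboundary operator. -/
def scoboundary (X : Type) [TopologicalSpace X] (n : ℕ) :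
    scochain X n →ₗ[ℚ] scochain X (n + 1) where
  toFun f := fun σ => ∑ i : Fin (n + 2), (-1 : ℚ) ^ (i : ℕ) * f (σ.comp (SSimplex.face i))
  map_add' f g := by
    funext σ
    simp [mul_add, Finset.sum_add_distrib]
  map_smul' q f := by
    funext σ
    simp [Finset.mul_sum, mul_left_comm]

def scocycles (X : Type) [TopologicalSpace X] (n : ℕ) : Submodule ℚ (scochain X n) :=
  LinearMap.ker (scoboundary X n)

def scobounds (X : Type) [TopologicalSpace X] : (n : ℕ) → Submodule ℚ (scochain X n)
  | 0 => ⊥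
  | n + 1 => LinearMap.range (scoboundary X n)

/-- Rational singular cohomology `H^n(X;ℚ)`. -/
def SingCoh (X : Type) [TopologicalSpace X] (n : ℕ) : Type :=
  scocycles X n ⧸ ((scobounds X n).comap (scocycles X n).subtype)

instance (X : Type) [TopologicalSpace X] (n : ℕ) : AddCommGroup (SingCoh X n) :=
  inferInstanceAs (AddCommGroup (_ ⧸ _))

instance (X : Type) [TopologicalSpace X] (n : ℕ) : Module ℚ (SingCoh X n) :=
  inferInstanceAs (Module ℚ (_ ⧸ _))

/-- Rational singular chains. -/
abbrev schain (X : Type) [TopologicalSpace X] (n : ℕ) := SingularSimplex X n →₀ ℚ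

/-- The singular boundary operator `C_{n+1} → C_n`. -/
def sboundary (X : Type) [TopologicalSpace X] (n : ℕ) :
    schain X (n + 1) →ₗ[ℚ] schain X n :=
  (Finsupp.lift (schain X n) ℚ (SingularSimplex X (n + 1))) fun σ =>
    ∑ i : Fin (n + 2), ((-1 : ℚ) ^ (i : ℕ)) • Finsupp.single (σ.comp (SSimplex.face i)) (1 : ℚ)

def scycles (X : Type) [TopologicalSpace X] : (n : ℕ) → Submodule ℚ (schain X n)
  | 0 => ⊤
  | n + 1 => LinearMap.ker (sboundary X n)

def sbounds (X : Type) [TopologicalSpace X] (n : ℕ) : Submodule ℚ (schain X n) :=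
  LinearMap.range (sboundary X n)

/-- Rational singular homology `H_n(X;ℚ)`. -/
def SingH (X : Type) [TopologicalSpace X] (n : ℕ) : Type :=
  scycles X n ⧸ ((sbounds X n).comap (scycles X n).subtype)

instance (X : Type) [TopologicalSpace X] (n : ℕ) : AddCommGroup (SingH X n) :=
  inferInstanceAs (AddCommGroup (_ ⧸ _))

instance (X : Type) [TopologicalSpace X] (n : ℕ) : Module ℚ (SingH X n) :=
  inferInstanceAs (Module ℚ (_ ⧸ _))

/-! ### Lusternik-Schnirelmann category -/

/-- `U` is contractible in `X`: the inclusion is null-homotopic. -/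
def NullhomotopicIncl {X : Type} [TopologicalSpace X] (U : Set X) : Prop :=
  ∃ x₀ : X, ContinuousMap.Homotopic
    ⟨(Subtype.val : U → X), continuous_subtype_val⟩ (ContinuousMap.const U x₀)

/-- `cat X ≤ m`: `X` is covered by `m+1` open subsets, each contractible in `X`. -/
def catLeSpace (X : Type) [TopologicalSpace X] (m : ℕ) : Prop :=
  ∃ U : Fin (m + 1) → Set X, (∀ i, IsOpen (U i)) ∧ (⋃ i, U i) = Set.univ ∧
    ∀ i, NullhomotopicIncl (U i)

/-- The LS category of a topological space, valued in `ℕ∞`. -/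
def catSpace (X : Type) [TopologicalSpace X] : ℕ∞ :=
  sInf {e : ℕ∞ | ∃ m : ℕ, e = m ∧ catLeSpace X m}

/-- The quotient `(∧V/∧^{>m}V, d̄)` of a Sullivan algebra, characterized as a
surjective cdga morphism with kernel `∧^{> m} V`. -/
structure SullivanAlgebra.LengthQuotient (S : SullivanAlgebra) (m : ℕ) where
  Q : CDGA
  ρ : CDGA.Hom S.toCDGA Q
  surj : Function.Surjective ρ.toFun
  ker : ∀ x : S.carrier, ρ.toFun x = 0 ↔ x ∈ S.wedge (m + 1)

/-- `cat (∧V,d) ≤ m`: there is a morphism `ψ` from a Sullivan model `(∧W,d)` of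
`∧V/∧^{>m}V` into `(∧V,d)` with `ρ ∘ ψ ∼ φ`. -/
def SullivanAlgebra.catLe (S : SullivanAlgebra) (m : ℕ) : Prop :=
  ∃ (LQ : S.LengthQuotient m) (W : SullivanAlgebra) (φ : CDGA.Hom W.toCDGA LQ.Q),
    CDGA.QuasiIso φ ∧ ∃ ψ : CDGA.Hom W.toCDGA S.toCDGA,
      CDGA.Homotopic (LQ.ρ.comp ψ) φ

/-- The LS category of a Sullivan algebra, valued in `ℕ∞`. -/
def SullivanAlgebra.cat (S : SullivanAlgebra) : ℕ∞ :=
  sInf {e : ℕ∞ | ∃ m : ℕ, e = m ∧ S.catLe m}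

/-! ### Sullivan's functor `A_PL` -/

/-- The data of Sullivan's contravariant functor `A_PL` from topological spaces
to rational cdga's: it is functorial, homotopy invariant, concentrated in
non-negative degrees, and its cohomology is (degreewise) isomorphic to rational
singular cohomology. -/
structure APLTheory : Type 1 where
  obj : (X : Type) → TopologicalSpace X → CDGA
  map : {X Y : Type} → (tX : TopologicalSpace X) → (tY : TopologicalSpace Y) →
    C(X, Y) → CDGA.Hom (obj Y tY) (obj X tX)
  map_id : ∀ (X : Type) (tX : TopologicalSpace X) (a : (obj X tX).carrier),
    (map tX tX (ContinuousMap.id X)).toFun a = a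
  map_comp : ∀ {X Y Z : Type} (tX : TopologicalSpace X) (tY : TopologicalSpace Y)
    (tZ : TopologicalSpace Z) (f : C(X, Y)) (g : C(Y, Z)) (a : (obj Z tZ).carrier),
    (map tX tZ (g.comp f)).toFun a = (map tX tY f).toFun ((map tY tZ g).toFun a)
  grading_neg : ∀ (X : Type) (tX : TopologicalSpace X) (n : ℤ), n < 0 →
    (obj X tX).grading n = ⊥
  cohEquiv : ∀ (X : Type) (tX : TopologicalSpace X) (n : ℕ),
    Nonempty (((obj X tX).H n) ≃ₗ[ℚ] @SingCoh X tX n)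
  htpy_invariant : ∀ {X Y : Type} (tX : TopologicalSpace X) (tY : TopologicalSpace Y)
    (f g : C(X, Y)), @ContinuousMap.Homotopic X Y tX tY f g →
    CDGA.Homotopic (map tX tY f) (map tX tY g)

/-- `A` plays the role of `A_PL(X)`: a cdga concentrated in non-negative degrees
whose cohomology is the rational cohomology of `X`. -/
def IsAPLModelOf (A : CDGA) (X : Type) [TopologicalSpace X] : Prop :=
  (∀ n : ℤ, n < 0 → A.grading n = ⊥) ∧
  ∀ n : ℕ, Nonempty (A.H n ≃ₗ[ℚ] SingCoh X n)

namespace CDGA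

section Grading

variable (A : CDGA)

theorem isInternal_grading : DirectSum.IsInternal A.grading := by
  classical
  refine DirectSum.isInternal_submodule_of_iSupIndep_of_iSup_eq_top ?_ A.spanning
  refine iSupIndep_of_dfinsupp_lsum_injective _ ?_
  refine (injective_iff_map_eq_zero _).2 fun v hv => ?_
  have key := A.indep (Finsupp.onFinset v.support (fun i => (v i : A.carrier)) (by
    intro i hi
    simpa using hi)) (fun i => (v i).2) (by
      rw [Finsupp.onFinset_sum _ (fun _ => rfl)]
      simpa [DFinsupp.sumAddHom_apply, DFinsupp.sum] using hv)
  ext i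
  simpa using DFunLike.congr_fun key i

instance gradedAlgebra : GradedAlgebra A.grading :=
  { A.isInternal_grading.chooseDecomposition with
    one_mem := A.one_mem
    mul_mem := fun _ _ _ _ ha hb => A.mul_mem ha hb }

/-- The projection of a cdga onto its component of degree `i`. -/
def proj (i : ℤ) : A.carrier →ₗ[ℚ] A.carrier := GradedAlgebra.proj A.grading i

theorem proj_mem (i : ℤ) (x : A.carrier) : A.proj i x ∈ A.grading i :=
  (DirectSum.decompose A.grading x i).2

variable {A}

theorem proj_of_mem {i : ℤ} {x : A.carrier} (hx : x ∈ A.grading i) : A.proj i x = x :=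
  DirectSum.decompose_of_mem_same _ hx

theorem proj_of_mem_ne {i j : ℤ} {x : A.carrier} (hx : x ∈ A.grading i) (hij : i ≠ j) :
    A.proj j x = 0 :=
  DirectSum.decompose_of_mem_ne _ hx hij

theorem proj_mul_of_left_mem {i : ℤ} {a : A.carrier} (ha : a ∈ A.grading i) (j : ℤ)
    (x : A.carrier) : A.proj (i + j) (a * x) = a * A.proj j x :=
  DirectSum.coe_decompose_mul_add_of_left_mem A.grading ha

theorem mem_of_forall_proj_mem {M : Submodule ℚ A.carrier} {x : A.carrier}
    (h : ∀ i, A.proj i x ∈ M) : x ∈ M := by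
  classical
  rw [← DirectSum.sum_support_decompose A.grading x]
  exact sum_mem fun i _ => h i

/-- A linear map which is homogeneous of degree `c` commutes with the projections. -/
theorem proj_map {B : CDGA} (L : A.carrier →ₗ[ℚ] B.carrier) (c : ℤ)
    (hL : ∀ i, ∀ x ∈ A.grading i, L x ∈ B.grading (i + c)) (i : ℤ) (x : A.carrier) :
    B.proj (i + c) (L x) = L (A.proj i x) := by
  have hx : x ∈ ⨆ i, A.grading i := A.spanning ▸ Submodule.mem_top
  induction hx using Submodule.iSup_induction' with
  | mem j x hx =>
    by_cases hij : j = i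
    · subst hij
      rw [proj_of_mem hx, proj_of_mem (hL _ _ hx)]
    · rw [proj_of_mem_ne hx hij, proj_of_mem_ne (hL _ _ hx) (by simpa using hij), map_zero]
  | zero => simp
  | add x y _ _ hx hy => simp [hx, hy]

theorem proj_d (i : ℤ) (x : A.carrier) : A.proj (i + 1) (A.d x) = A.d (A.proj i x) :=
  proj_map A.d 1 (fun _ _ h => A.d_mem h) i x

theorem proj_mem_of_mem_iSup {G : ℤ → Submodule ℚ A.carrier} (hG : ∀ i, G i ≤ A.grading i)
    {x : A.carrier} (hx : x ∈ ⨆ i, G i) (i : ℤ) : A.proj i x ∈ G i := by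
  induction hx using Submodule.iSup_induction' with
  | mem j x hx =>
    by_cases hij : j = i
    · subst hij
      rwa [proj_of_mem (hG _ hx)]
    · rw [proj_of_mem_ne (hG _ hx) hij]
      exact zero_mem _
  | zero => simp
  | add x y _ _ hx hy =>
    rw [map_add]
    exact add_mem hx hy

theorem exists_mem_grading_of_mem_cobounds {n : ℤ} {x : A.carrier} (hx : x ∈ A.cobounds (n + 1)) :
    ∃ y ∈ A.grading n, A.d y = x := by
  obtain ⟨hxn, y, rfl⟩ := hx
  exact ⟨A.proj n y, A.proj_mem n y, by rw [← proj_d, proj_of_mem hxn]⟩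

/-- The degree `m` part of the subalgebra generated by graded subspaces `G k`, `k ≥ 1`: such an
element only involves generators of degree less than `m`, up to a summand in `G m`. -/
theorem proj_mem_adjoin_sup {G : ℤ → Submodule ℚ A.carrier} (hG : ∀ i, G i ≤ A.grading i)
    (hpos : ∀ i ≤ 0, G i = ⊥) {x : A.carrier}
    (hx : x ∈ Algebra.adjoin ℚ ((⨆ i, G i : Submodule ℚ A.carrier) : Set A.carrier)) (m : ℤ) :
    A.proj m x ∈
      (Algebra.adjoin ℚ (⋃ j < m, (G j : Set A.carrier))).toSubmodule ⊔ G m := by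
  set N : ℤ → Submodule ℚ A.carrier := fun m =>
    (Algebra.adjoin ℚ (⋃ j < m, (G j : Set A.carrier))).toSubmodule ⊔ G m
  have hN_le : ∀ {j m : ℤ}, j < m →
      N j ≤ (Algebra.adjoin ℚ (⋃ j < m, (G j : Set A.carrier))).toSubmodule := by
    intro j m hjm
    refine sup_le (fun y hy => ?_) fun y hy => ?_
    · refine Algebra.adjoin_mono (Set.iUnion₂_subset fun i hi => ?_) hy
      exact Set.subset_biUnion_of_mem (u := fun i => (G i : Set A.carrier))
        (show i ∈ {i | i < m} from hi.trans hjm)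
    · exact Algebra.subset_adjoin (Set.mem_biUnion (show j ∈ {i | i < m} from hjm) hy)
  have hN_nonpos : ∀ j ≤ 0, ∀ y ∈ N j, ∃ q : ℚ, y = algebraMap ℚ A.carrier q := by
    intro j hj y hy
    have hle : N j ≤ (⊥ : Subalgebra ℚ A.carrier).toSubmodule := by
      refine sup_le ?_ (by rw [hpos j hj]; exact bot_le)
      refine Subalgebra.toSubmodule.monotone (Algebra.adjoin_le ?_)
      refine Set.iUnion₂_subset fun i hi => ?_
      rw [hpos i (by omega)]
      rintro _ rfl
      exact zero_mem _
    obtain ⟨q, rfl⟩ := Algebra.mem_bot.1 (hle hy)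
    exact ⟨q, rfl⟩
  let M : Submodule ℚ A.carrier := ⨅ m, (N m).comap (A.proj m)
  have hM : ∀ y, y ∈ M ↔ ∀ m, A.proj m y ∈ N m := fun y => by simp [M]
  have hstable : ∀ k, ∀ v ∈ G k, ∀ y ∈ M, v * y ∈ M := by
    intro k v hv y hy
    rw [hM] at hy ⊢
    intro m
    obtain ⟨j, rfl⟩ : ∃ j, m = k + j := ⟨m - k, by ring⟩
    rw [proj_mul_of_left_mem (hG _ hv)]
    by_cases hk : k ≤ 0
    · rw [hpos k hk, Submodule.mem_bot] at hv
      simp [hv]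
    rcases lt_trichotomy j 0 with hj | rfl | hj
    · obtain ⟨q, hq⟩ := hN_nonpos j hj.le _ (hy j)
      have hzero : A.proj j y = 0 := by
        rw [← proj_of_mem (A.proj_mem j y), hq, Algebra.algebraMap_eq_smul_one, map_smul,
          proj_of_mem_ne A.one_mem hj.ne', smul_zero]
      simp [hzero]
    · obtain ⟨q, hq⟩ := hN_nonpos 0 le_rfl _ (hy 0)
      rw [hq, add_zero, ← Algebra.commutes, ← Algebra.smul_def]
      exact Submodule.mem_sup_right (Submodule.smul_mem _ _ hv)
    · refine Submodule.mem_sup_left (Subalgebra.mul_mem _ ?_ (hN_le (by omega) (hy j)))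
      exact hN_le (j := k) (by omega) (Submodule.mem_sup_right hv)
  let R : Subalgebra ℚ A.carrier :=
    { carrier := {a | ∀ y ∈ M, a * y ∈ M}
      mul_mem' := fun {a b} ha hb y hy => by rw [mul_assoc]; exact ha _ (hb _ hy)
      add_mem' := fun {a b} ha hb y hy => by rw [add_mul]; exact add_mem (ha _ hy) (hb _ hy)
      algebraMap_mem' := fun q y hy => by
        rw [← Algebra.smul_def]; exact Submodule.smul_mem _ _ hy }
  have hR : (⨆ i, G i) ≤ R.toSubmodule := iSup_le fun k v hv => hstable k v hv
  have hone : (1 : A.carrier) ∈ M := by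
    rw [hM]
    intro m
    by_cases hm : 0 = m
    · subst hm
      rw [proj_of_mem A.one_mem]
      exact Submodule.mem_sup_left (Subalgebra.one_mem _)
    · rw [proj_of_mem_ne A.one_mem hm]
      exact zero_mem _
  have hxM := (Algebra.adjoin_le (S := R) hR) hx 1 hone
  rw [mul_one, hM] at hxM
  exact hxM m

end Grading

section GradedHom

variable {A B : CDGA}

/-- An algebra morphism of degree `0`, not required to commute with the differentials. -/
def IsGradedHom (ψ : A.carrier →ₐ[ℚ] B.carrier) : Prop :=
  ∀ i, ∀ x ∈ A.grading i, ψ x ∈ B.grading i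

/-- The subalgebra on which a degree `0` algebra morphism commutes with the differentials. -/
def dEqualizer (ψ : A.carrier →ₐ[ℚ] B.carrier) (hψ : IsGradedHom ψ) :
    Subalgebra ℚ A.carrier where
  carrier := {x | B.d (ψ x) = ψ (A.d x)}
  add_mem' := fun {x y} hx hy => by
    simp only [Set.mem_ofPred_eq, map_add] at *
    rw [hx, hy]
  algebraMap_mem' := fun q => by
    have hd : ∀ C : CDGA, C.d (algebraMap ℚ C.carrier q) = 0 := by
      intro C
      have h := C.leibniz C.one_mem 1
      rw [zpow_zero, one_smul, mul_one, mul_one, one_mul, left_eq_add] at h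
      rw [Algebra.algebraMap_eq_smul_one, map_smul, h, smul_zero]
    rw [Set.mem_ofPred_eq, AlgHom.commutes, hd, hd, map_zero]
  mul_mem' := fun {x y} hx hy => by
    simp only [Set.mem_ofPred_eq] at *
    let K : Submodule ℚ A.carrier :=
      LinearMap.ker (B.d ∘ₗ ψ.toLinearMap ∘ₗ LinearMap.mulRight ℚ y -
        ψ.toLinearMap ∘ₗ A.d ∘ₗ LinearMap.mulRight ℚ y)
    have hK : ∀ z, z ∈ K ↔ B.d (ψ (z * y)) = ψ (A.d (z * y)) := fun z => by
      simp [K, sub_eq_zero]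
    rw [← hK]
    refine mem_of_forall_proj_mem fun i => ?_
    have hxi : B.d (ψ (A.proj i x)) = ψ (A.d (A.proj i x)) := by
      have h1 := proj_map (A := A) (B := B) (B.d ∘ₗ ψ.toLinearMap) 1
        (fun j z hz => B.d_mem (hψ j z hz)) i x
      have h2 := proj_map (A := A) (B := B) (ψ.toLinearMap ∘ₗ A.d) 1
        (fun j z hz => hψ _ _ (A.d_mem hz)) i x
      simp only [LinearMap.comp_apply, AlgHom.toLinearMap_apply] at h1 h2
      rw [← h1, ← h2, hx]
    rw [hK, map_mul, A.leibniz (A.proj_mem i x), B.leibniz (hψ _ _ (A.proj_mem i x)), hxi, hy]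
    simp

/-- The algebra morphism underlying a morphism of cdga's. -/
def Hom.toAlgHom (f : Hom A B) : A.carrier →ₐ[ℚ] B.carrier := f.toFun.toRatAlgHom

theorem QuasiIso.of_rightInverse {f : Hom A B} (hf : QuasiIso f) {g : Hom B A}
    (hfg : ∀ y, f.toFun (g.toFun y) = y) : QuasiIso g := by
  refine ⟨?_, ?_⟩
  · rintro n b ⟨hbn, -⟩ ⟨-, a, ha⟩
    exact ⟨hbn, f.toFun a, by rw [← f.map_d, ha, hfg]⟩
  · rintro n a ⟨han, had⟩
    have had : A.d a = 0 := had
    have hb : f.toFun a ∈ B.cocycles n :=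
      ⟨f.map_grading _ _ han, by rw [SetLike.mem_coe, LinearMap.mem_ker, ← f.map_d, had, map_zero]⟩
    refine ⟨_, hb, hf.1 n _ ⟨?_, ?_⟩ ?_⟩
    · exact sub_mem han (g.map_grading _ _ hb.1)
    · rw [SetLike.mem_coe, LinearMap.mem_ker, map_sub, ← g.map_d, ← f.map_d, had, map_zero, map_zero, sub_zero]
    · rw [map_sub, hfg, sub_self]
      exact zero_mem _

end GradedHom

/-- The cdga `ℚ ⊕ ℚε` with `ε² = 0`, `ε` of degree `k ≠ 0` and zero differential. -/
def dualNumber (k : ℤ) (hk : k ≠ 0) : CDGA where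
  carrier := DualNumber ℚ
  grading i :=
    { carrier := {x | (i ≠ 0 → x.fst = 0) ∧ (i ≠ k → x.snd = 0)}
      add_mem' := fun {x y} hx hy =>
        ⟨fun h => by simp [hx.1 h, hy.1 h], fun h => by simp [hx.2 h, hy.2 h]⟩
      zero_mem' := by simp
      smul_mem' := fun q x hx => ⟨fun h => by simp [hx.1 h], fun h => by simp [hx.2 h]⟩ }
  spanning := by
    refine eq_top_iff.2 fun x _ => ?_
    rw [← TrivSqZeroExt.inl_fst_add_inr_snd_eq x]
    refine add_mem (Submodule.mem_iSup_of_mem 0 ?_) (Submodule.mem_iSup_of_mem k ?_)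
    · exact ⟨by simp, by simp⟩
    · exact ⟨by simp, by simp⟩
  indep f hf hsum := by
    have h1 : ∑ i ∈ f.support, (f i).fst = 0 := by
      simpa [Finsupp.sum] using congrArg (TrivSqZeroExt.fstHom ℚ ℚ ℚ) hsum
    have h2 : ∑ i ∈ f.support, (f i).snd = 0 := by
      simpa [Finsupp.sum] using congrArg (TrivSqZeroExt.sndHom ℚ ℚ) hsum
    rw [Finset.sum_eq_single 0
      (fun i _ hi => (hf i).1 hi) (fun h => by simp [Finsupp.notMem_support_iff.1 h])] at h1
    rw [Finset.sum_eq_single k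
      (fun i _ hi => (hf i).2 hi) (fun h => by simp [Finsupp.notMem_support_iff.1 h])] at h2
    ext i
    · by_cases hi : i = 0
      · subst hi; exact h1
      · exact (hf i).1 hi
    · by_cases hi : i = k
      · subst hi; exact h2
      · exact (hf i).2 hi
  one_mem := ⟨by simp, by simp⟩
  mul_mem := by
    rintro i j a b ⟨ha1, ha2⟩ ⟨hb1, hb2⟩
    refine ⟨fun h => ?_, fun h => ?_⟩
    · by_cases hi : i = 0
      · simp [hb1 (by omega)]
      · simp [ha1 hi]
    · have h1 : a.fst * b.snd = 0 := by
        by_cases hi : i = 0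
        · simp [hb2 (by omega)]
        · simp [ha1 hi]
      have h2 : a.snd * b.fst = 0 := by
        by_cases hj : j = 0
        · simp [ha2 (by omega)]
        · simp [hb1 hj]
      rw [DualNumber.snd_mul, h1, h2, add_zero]
  gcomm := by
    rintro i j a b ⟨ha1, ha2⟩ ⟨hb1, hb2⟩
    by_cases hi : i = 0
    · simp [hi, mul_comm a b]
    by_cases hj : j = 0
    · simp [hj, mul_comm a b]
    · have h : a * b = 0 := by ext <;> simp [ha1 hi, hb1 hj]
      rw [mul_comm b a, h, smul_zero]
  d := 0
  d_mem := fun _ => zero_mem _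
  d_sq := fun _ => rfl
  leibniz := fun _ _ => by simp

end CDGA

namespace SullivanAlgebra

open CDGA

variable (T : SullivanAlgebra)

/-- A degree preserving linear map defined on a graded subspace of the space of generators extends
to a degree `0` algebra morphism. -/
theorem exists_gradedHom {A : CDGA} (p : T.carrier →ₗ.[ℚ] A.carrier)
    (hdom : p.domain ≤ ⨆ k, p.domain ⊓ T.V k)
    (hp : ∀ k, ∀ u : p.domain, (u : T.carrier) ∈ T.V k → p u ∈ A.grading k) :
    ∃ ψ : T.carrier →ₐ[ℚ] A.carrier,
      IsGradedHom (A := T.toCDGA) ψ ∧ ∀ u : p.domain, ψ u = p u := by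
  have hext : ∀ k, ∃ f : T.V k →ₗ[ℚ] A.grading k,
      ∀ (v : T.V k) (hv : (v : T.carrier) ∈ p.domain), (f v : A.carrier) = p ⟨v, hv⟩ := by
    intro k
    let g : p.domain.comap (T.V k).subtype →ₗ[ℚ] A.grading k :=
      LinearMap.codRestrict (A.grading k)
        (p.toFun ∘ₗ LinearMap.codRestrict p.domain
          ((T.V k).subtype ∘ₗ (p.domain.comap (T.V k).subtype).subtype) fun v => v.2)
        fun v => hp k _ v.1.2
    obtain ⟨f, hf⟩ := LinearMap.exists_extend g
    refine ⟨f, fun v hv => ?_⟩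
    exact congrArg Subtype.val (LinearMap.congr_fun hf ⟨v, hv⟩)
  choose f hf using hext
  obtain ⟨ψ, ⟨-, hψ, hψV⟩, -⟩ :=
    T.free A (fun k => (A.grading k).subtype ∘ₗ f k) fun k v => (f k v).2
  refine ⟨ψ.toRatAlgHom, hψ, fun u => ?_⟩
  let E : Submodule ℚ T.carrier := Submodule.map p.domain.subtype
    (LinearMap.ker (ψ.toRatAlgHom.toLinearMap ∘ₗ p.domain.subtype - p.toFun))
  have hE : p.domain ≤ E := by
    refine hdom.trans (iSup_le fun k v hv => ?_)
    refine ⟨⟨v, hv.1⟩, ?_, rfl⟩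
    have h := hψV k ⟨v, hv.2⟩
    rw [LinearMap.comp_apply, Submodule.subtype_apply, hf k _ hv.1] at h
    simpa [sub_eq_zero] using h
  obtain ⟨u', hu', hu⟩ := hE u.2
  obtain rfl : u' = u := Subtype.ext hu
  simpa [sub_eq_zero] using hu'

/-- Generators of degree `m` are linearly independent of the products of at least two generators,
modulo the subalgebra generated in lower degrees. -/
theorem eq_zero_of_add_mem_wedge_two {m : ℤ} (hm : 0 < m) {y w : T.carrier}
    (hy : y ∈ Algebra.adjoin ℚ (⋃ j < m, (T.V j : Set T.carrier))) (hw : w ∈ T.V m)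
    (hyw : y + w ∈ T.wedge 2) : w = 0 := by
  suffices h : (⟨w, hw⟩ : T.V m) = 0 from congrArg Subtype.val h
  rw [← Module.forall_dual_apply_eq_zero_iff ℚ]
  intro l
  let p : T.carrier →ₗ.[ℚ] (dualNumber m hm.ne').carrier :=
    ⟨T.V m, TrivSqZeroExt.inrHom ℚ ℚ ∘ₗ l⟩
  obtain ⟨ψ, hψ, hψp⟩ := T.exists_gradedHom p
    (fun v hv => Submodule.mem_iSup_of_mem m ⟨hv, hv⟩) (by
      intro k u hu
      by_cases hk : k = m
      · subst hk
        exact ⟨fun _ => TrivSqZeroExt.fst_inr _ _, fun h => absurd rfl h⟩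
      · have hzero : u = 0 := by
          refine Subtype.ext ?_
          rw [← proj_of_mem (A := T.toCDGA) (T.V_le m u.2)]
          exact proj_of_mem_ne (A := T.toCDGA) (T.V_le k hu) hk
        rw [hzero, LinearPMap.map_zero]
        exact zero_mem _)
  have hfst : T.Vtot ≤ LinearMap.ker
      ((TrivSqZeroExt.fstHom ℚ ℚ ℚ).toLinearMap ∘ₗ ψ.toLinearMap) := by
    refine iSup_le fun k v hv => ?_
    by_cases hk : k = 0
    · rw [T.V_nonpos k hk.le, Submodule.mem_bot] at hv
      rw [hv]
      exact zero_mem _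
    · exact (hψ k v (T.V_le k hv)).1 hk
  have hmul : ∀ x y : DualNumber ℚ, x.fst = 0 → y.fst = 0 → x * y = 0 := by
    intro x y hx hy
    ext <;> simp [hx, hy]
  have hwedge : T.wedge 2 ≤ LinearMap.ker ψ.toLinearMap := by
    have hsq : T.Vtot ^ 2 ≤ LinearMap.ker ψ.toLinearMap := by
      rw [pow_two]
      refine Submodule.mul_le.2 fun a ha b hb => ?_
      have ha : TrivSqZeroExt.fst (ψ a) = 0 := hfst ha
      have hb : TrivSqZeroExt.fst (ψ b) = 0 := hfst hb
      rw [LinearMap.mem_ker, AlgHom.toLinearMap_apply, map_mul]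
      exact hmul _ _ ha hb
    refine Submodule.mul_le.2 fun a ha b _ => ?_
    have ha : ψ a = 0 := hsq ha
    rw [LinearMap.mem_ker, AlgHom.toLinearMap_apply, map_mul, ha, zero_mul]
  have hlow : Algebra.adjoin ℚ (⋃ j < m, (T.V j : Set T.carrier)) ≤
      (⊥ : Subalgebra ℚ (dualNumber m hm.ne').carrier).comap ψ := by
    refine Algebra.adjoin_le (Set.iUnion₂_subset fun j hj v hv => ?_)
    have hzero : ψ v = 0 := by
      by_cases hj0 : j = 0
      · have hv : v ∈ T.V j := hv
        rw [T.V_nonpos j hj0.le, Submodule.mem_bot] at hv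
        rw [hv, map_zero]
      · have h := hψ j v (T.V_le j hv)
        exact TrivSqZeroExt.ext (h.1 hj0) (h.2 hj.ne)
    change ψ v ∈ (⊥ : Subalgebra ℚ _)
    rw [hzero]
    exact Subalgebra.zero_mem _
  obtain ⟨q, hq⟩ := Algebra.mem_bot.1 (hlow hy)
  have h : (TrivSqZeroExt.inl q + TrivSqZeroExt.inr (l ⟨w, hw⟩) : DualNumber ℚ) = 0 := by
    have hψw : ψ w = TrivSqZeroExt.inr (l ⟨w, hw⟩) := hψp ⟨w, hw⟩
    have hψy : ψ y = algebraMap ℚ _ q := hq.symm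
    have hψyw : ψ (y + w) = 0 := hwedge hyw
    rw [map_add, hψy, hψw] at hψyw
    exact hψyw
  simpa using congrArg TrivSqZeroExt.snd h

end SullivanAlgebra

section Lifting

open CDGA

variable {A : CDGA}

/-- A section of `φ`, compatible with the degrees and the differentials, defined on a graded
subspace of the generators of a Sullivan algebra. -/
structure IsPartialSection {T : SullivanAlgebra} (φ : Hom A T.toCDGA)
    (p : T.carrier →ₗ.[ℚ] A.carrier) : Prop where
  domain_le : p.domain ≤ ⨆ k, p.domain ⊓ T.V k
  mem_grading : ∀ k, ∀ u : p.domain, (u : T.carrier) ∈ T.V k → p u ∈ A.grading k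
  right_inv : ∀ u : p.domain, φ.toFun (p u) = u
  comm_d : ∀ ψ : T.carrier →ₐ[ℚ] A.carrier, IsGradedHom (A := T.toCDGA) ψ →
    (∀ u : p.domain, ψ u = p u) → ∀ u : p.domain, A.d (p u) = ψ (T.d u)

namespace IsPartialSection

variable {T : SullivanAlgebra} {φ : Hom A T.toCDGA} {p : T.carrier →ₗ.[ℚ] A.carrier}

theorem bot (φ : Hom A T.toCDGA) : IsPartialSection φ ⊥ := by
  have hzero : ∀ u : (⊥ : T.carrier →ₗ.[ℚ] A.carrier).domain, u = 0 :=
    fun u => Subtype.ext ((Submodule.mem_bot ℚ).1 u.2)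
  refine ⟨bot_le, fun k u _ => ?_, fun u => ?_, fun ψ _ _ u => ?_⟩
  · rw [hzero u, LinearPMap.map_zero]
    exact zero_mem _
  · rw [hzero u, LinearPMap.map_zero, map_zero]
    rfl
  · rw [hzero u, LinearPMap.map_zero, map_zero, Submodule.coe_zero, map_zero, map_zero]

theorem sSup {c : Set (T.carrier →ₗ.[ℚ] A.carrier)} (hne : c.Nonempty)
    (hc : DirectedOn (· ≤ ·) c) (h : ∀ p ∈ c, IsPartialSection φ p) :
    IsPartialSection φ (LinearPMap.sSup c hc) := by
  have hex : ∀ u : (LinearPMap.sSup c hc).domain, ∃ p ∈ c, ∃ u' : p.domain,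
      (u' : T.carrier) = u ∧ LinearPMap.sSup c hc u = p u' := by
    intro u
    obtain ⟨p, hp, hu⟩ := (LinearPMap.mem_domain_sSup_iff hne hc).1 u.2
    exact ⟨p, hp, ⟨u, hu⟩, rfl, LinearPMap.sSup_apply hc hp ⟨u, hu⟩⟩
  refine ⟨fun v hv => ?_, fun k u hu => ?_, fun u => ?_, fun ψ hψ hψp u => ?_⟩
  · obtain ⟨p, hp, hv⟩ := (LinearPMap.mem_domain_sSup_iff hne hc).1 hv
    exact iSup_mono (fun k => inf_le_inf_right _ (LinearPMap.le_sSup hc hp).1)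
      ((h p hp).domain_le hv)
  · obtain ⟨p, hp, u', hu', hpu⟩ := hex u
    exact hpu ▸ (h p hp).mem_grading k u' (hu' ▸ hu)
  · obtain ⟨p, hp, u', hu', hpu⟩ := hex u
    rw [hpu, (h p hp).right_inv, hu']
  · obtain ⟨p, hp, u', hu', hpu⟩ := hex u
    rw [hpu, ← hu']
    refine (h p hp).comm_d ψ hψ (fun w => ?_) u'
    rw [← LinearPMap.sSup_apply hc hp w, ← hψp]

theorem supSpanSingleton (hp : IsPartialSection φ p) {n : ℤ} {v : T.carrier} (hv : v ∈ T.V n)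
    (hvp : v ∉ p.domain) {s : A.carrier} (hs : s ∈ A.grading n) (hφs : φ.toFun s = v)
    (hds : ∀ ψ : T.carrier →ₐ[ℚ] A.carrier, IsGradedHom (A := T.toCDGA) ψ →
      (∀ u : p.domain, ψ u = p u) → A.d s = ψ (T.d v)) :
    IsPartialSection φ (p.supSpanSingleton v s hvp) := by
  have hex : ∀ u : (p.supSpanSingleton v s hvp).domain, ∃ (u' : p.domain) (c : ℚ),
      (u : T.carrier) = u' + c • v ∧ p.supSpanSingleton v s hvp u = p u' + c • s := by
    rintro ⟨u, hu⟩
    obtain ⟨u', hu', w, hw, rfl⟩ := Submodule.mem_sup.1 hu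
    obtain ⟨c, rfl⟩ := Submodule.mem_span_singleton.1 hw
    exact ⟨⟨u', hu'⟩, c, rfl, LinearPMap.supSpanSingleton_apply_mk p v s hvp u' hu' c⟩
  refine ⟨?_, fun k u hu => ?_, fun u => ?_, fun ψ hψ hψp u => ?_⟩
  · rw [LinearPMap.domain_supSpanSingleton]
    refine sup_le (hp.domain_le.trans (iSup_mono fun k => inf_le_inf_right _ le_sup_left)) ?_
    rw [Submodule.span_singleton_le_iff_mem]
    exact Submodule.mem_iSup_of_mem n
      ⟨Submodule.mem_sup_right (Submodule.mem_span_singleton_self v), hv⟩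
  · obtain ⟨u', c, hu', hpu⟩ := hex u
    rw [hpu]
    by_cases hk : k = n
    · subst hk
      refine add_mem (hp.mem_grading k u' ?_) (Submodule.smul_mem _ _ hs)
      rw [eq_sub_of_add_eq hu'.symm]
      exact sub_mem hu (Submodule.smul_mem _ _ hv)
    · have hproj : T.proj n u' ∈ p.domain := (proj_mem_of_mem_iSup (A := T.toCDGA)
        (fun i => inf_le_right.trans (T.V_le i)) (hp.domain_le u'.2) n).1
      have hcv : c • v ∈ p.domain := by
        have h : T.proj n u = 0 := proj_of_mem_ne (A := T.toCDGA) (T.V_le k hu) hk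
        rw [hu', map_add, proj_of_mem (A := T.toCDGA)
          (Submodule.smul_mem _ c (T.V_le n hv))] at h
        rw [eq_neg_of_add_eq_zero_right h]
        exact neg_mem hproj
      obtain rfl : c = 0 := by
        by_contra hc
        exact hvp ((Submodule.smul_mem_iff _ hc).1 hcv)
      rw [zero_smul, add_zero] at hu' ⊢
      exact hp.mem_grading k u' (hu' ▸ hu)
  · obtain ⟨u', c, hu', hpu⟩ := hex u
    rw [hpu, map_add, φ.map_smul, hp.right_inv, hφs, hu']
  · have hψp' : ∀ w : p.domain, ψ w = p w := fun w => by
      rw [← LinearPMap.supSpanSingleton_apply_mk_of_mem p s hvp w.2]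
      exact hψp ⟨w, Submodule.mem_sup_left w.2⟩
    obtain ⟨u', c, hu', hpu⟩ := hex u
    rw [hpu, hu', map_add, map_add, map_smul, map_smul, map_add, map_smul,
      hp.comm_d ψ hψ hψp', hds ψ hψ hψp']

theorem adjoin_le_dEqualizer (hp : IsPartialSection φ p) {ψ : T.carrier →ₐ[ℚ] A.carrier}
    (hψ : IsGradedHom (A := T.toCDGA) ψ) (hψp : ∀ u : p.domain, ψ u = p u) :
    Algebra.adjoin ℚ (p.domain : Set T.carrier) ≤ dEqualizer (A := T.toCDGA) ψ hψ :=
  Algebra.adjoin_le fun u hu =>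
    show A.d (ψ u) = ψ (T.d u) from hψp ⟨u, hu⟩ ▸ hp.comm_d ψ hψ hψp ⟨u, hu⟩

theorem right_inv_of_mem_adjoin (hp : IsPartialSection φ p) {ψ : T.carrier →ₐ[ℚ] A.carrier}
    (hψp : ∀ u : p.domain, ψ u = p u) {t : T.carrier}
    (ht : t ∈ Algebra.adjoin ℚ (p.domain : Set T.carrier)) : φ.toFun (ψ t) = t := by
  have hle : Algebra.adjoin ℚ (p.domain : Set T.carrier) ≤
      AlgHom.equalizer (φ.toAlgHom.comp ψ) (AlgHom.id ℚ T.carrier) := by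
    refine Algebra.adjoin_le fun u hu => ?_
    change φ.toFun (ψ u) = u
    rw [hψp ⟨u, hu⟩, hp.right_inv]
  exact hle ht

/-- A partial section of a quasi-isomorphism extends to a generator `v` of degree `n` whose
differential lies in the subalgebra generated by the domain, as soon as this subalgebra contains
everything in degree `n - 1`. -/
theorem exists_extension (hp : IsPartialSection φ p) (hφ : QuasiIso φ) {n : ℤ} {v : T.carrier}
    (hv : v ∈ T.V n) (hdv : T.d v ∈ Algebra.adjoin ℚ (p.domain : Set T.carrier))
    (hlow : ∀ t ∈ T.grading (n - 1), t ∈ Algebra.adjoin ℚ (p.domain : Set T.carrier)) :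
    ∃ p', IsPartialSection φ p' ∧ p ≤ p' ∧ v ∈ p'.domain := by
  by_cases hvp : v ∈ p.domain
  · exact ⟨p, hp, le_rfl, hvp⟩
  obtain ⟨ψ, hψ, hψp⟩ := T.exists_gradedHom p hp.domain_le hp.mem_grading
  have hvn := T.V_le n hv
  have hφψ := fun t ht => hp.right_inv_of_mem_adjoin (t := t) hψp ht
  have hdψ : ∀ t ∈ Algebra.adjoin ℚ (p.domain : Set T.carrier), A.d (ψ t) = ψ (T.d t) :=
    fun t ht => hp.adjoin_le_dEqualizer hψ hψp ht
  obtain ⟨s, hs, hds⟩ : ∃ s ∈ A.grading n, A.d s = ψ (T.d v) := by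
    refine exists_mem_grading_of_mem_cobounds (hφ.1 (n + 1) _ ⟨hψ _ _ (T.d_mem hvn), ?_⟩ ?_)
    · rw [SetLike.mem_coe, LinearMap.mem_ker, hdψ _ hdv, T.d_sq, map_zero]
    · rw [hφψ _ hdv]
      exact ⟨T.d_mem hvn, v, rfl⟩
  obtain ⟨z, ⟨hz, hdz⟩, hzt⟩ := hφ.2 n (v - φ.toFun s)
    ⟨sub_mem hvn (φ.map_grading _ _ hs), by
      rw [SetLike.mem_coe, LinearMap.mem_ker, map_sub, ← φ.map_d, hds, hφψ _ hdv, sub_self]⟩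
  obtain ⟨t, ht, hdt⟩ : ∃ t ∈ T.grading (n - 1), T.d t = v - φ.toFun s - φ.toFun z :=
    exists_mem_grading_of_mem_cobounds (A := T.toCDGA) (by rwa [sub_add_cancel])
  have hdz : A.d z = 0 := hdz
  have hgrad : s + z + A.d (ψ t) ∈ A.grading n := by
    refine add_mem (add_mem hs hz) ?_
    have h := A.d_mem (hψ _ _ ht)
    rwa [sub_add_cancel] at h
  have hlift : φ.toFun (s + z + A.d (ψ t)) = v := by
    rw [map_add, map_add, φ.map_d, hφψ _ (hlow t ht), hdt]
    abel
  refine ⟨_, hp.supSpanSingleton hv hvp hgrad hlift fun ψ' _ hψp' => ?_,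
    LinearPMap.left_le_sup _ _ _, Submodule.mem_sup_right (Submodule.mem_span_singleton_self v)⟩
  have hagree : Algebra.adjoin ℚ (p.domain : Set T.carrier) ≤ AlgHom.equalizer ψ ψ' :=
    Algebra.adjoin_le fun u hu => (hψp ⟨u, hu⟩).trans (hψp' ⟨u, hu⟩).symm
  rw [map_add, map_add, hdz, A.d_sq, hds, add_zero, add_zero]
  exact hagree hdv

end IsPartialSection

/-- Every quasi-isomorphism onto a minimal Sullivan algebra has a section. -/
theorem MinimalSullivanAlgebra.exists_section (T : MinimalSullivanAlgebra)
    (φ : Hom A T.toCDGA) (hφ : QuasiIso φ) :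
    ∃ ψ : Hom T.toCDGA A, ∀ t, φ.toFun (ψ.toFun t) = t := by
  obtain ⟨p, -, hp, hmax⟩ := zorn_le_nonempty₀ {p | IsPartialSection φ p}
    (fun c hc hchain q hq => ⟨LinearPMap.sSup c hchain.directedOn,
      IsPartialSection.sSup ⟨q, hq⟩ hchain.directedOn hc,
      fun _ => LinearPMap.le_sSup hchain.directedOn⟩) ⊥ (IsPartialSection.bot φ)
  have hstep : ∀ n : ℤ, 0 < n → (∀ j < n, T.V j ≤ p.domain) → T.V n ≤ p.domain := by
    intro n hn hj
    have hlow : ∀ t ∈ T.grading (n - 1), t ∈ Algebra.adjoin ℚ (p.domain : Set T.carrier) := by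
      intro t ht
      have htop : t ∈ Algebra.adjoin ℚ ((⨆ k, T.V k : Submodule ℚ T.carrier) : Set T.carrier) :=
        T.gen ▸ Algebra.mem_top
      have h := proj_mem_adjoin_sup (A := T.toCDGA) T.V_le T.V_nonpos htop (n - 1)
      rw [proj_of_mem ht] at h
      refine (sup_le (Subalgebra.toSubmodule.monotone (Algebra.adjoin_mono
        (Set.iUnion₂_subset fun j hjn => hj j (by omega)))) fun u hu => ?_ :
          _ ≤ (Algebra.adjoin ℚ (p.domain : Set T.carrier)).toSubmodule) h
      exact Algebra.subset_adjoin (hj _ (by omega) hu)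
    have hclosed : ∀ v ∈ T.V n, T.d v ∈ Algebra.adjoin ℚ (p.domain : Set T.carrier) →
        v ∈ p.domain := by
      intro v hv hdv
      obtain ⟨p', hp', hle, hvp'⟩ := hp.exists_extension hφ hv hdv hlow
      exact (hmax hp' hle).1 hvp'
    have hfiltV : ∀ r, ∀ x ∈ T.filt r, ∀ j, T.proj j x ∈ T.V j := fun r x hx j =>
      proj_mem_of_mem_iSup (A := T.toCDGA) T.V_le (T.filt_le r hx) j
    have hfilt : ∀ r, ∀ x ∈ T.filt r, T.proj n x ∈ p.domain := by
      intro r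
      induction r with
      | zero =>
        intro x hx
        refine hclosed _ (hfiltV 0 x hx n) ?_
        rw [← proj_d, T.d_filt_zero x hx, map_zero]
        exact zero_mem _
      | succ r ih =>
        intro x hx
        refine hclosed _ (hfiltV _ x hx n) ?_
        let G : ℤ → Submodule ℚ T.carrier := fun j => if j ≤ n then p.domain ⊓ T.V j else T.V j
        have hGV : ∀ j, G j ≤ T.V j := fun j => by
          by_cases hjn : j ≤ n <;> simp [G, hjn]
        have hGp : ∀ j < n + 1, G j ≤ p.domain := fun j hjn => by
          simp [G, Int.lt_add_one_iff.1 hjn]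
        have hfiltG : T.filt r ≤ ⨆ j, G j := by
          intro y hy
          refine mem_of_forall_proj_mem (A := T.toCDGA) fun j => Submodule.mem_iSup_of_mem j ?_
          have hyV := hfiltV r y hy j
          by_cases hjn : j ≤ n
          · rcases hjn.lt_or_eq with hlt | rfl
            · simpa [G, hjn] using ⟨hj j hlt hyV, hyV⟩
            · simpa [G] using ⟨ih y hy, hyV⟩
          · simpa [G, hjn] using hyV
        obtain ⟨y, hy, w, hw, hyw⟩ := Submodule.mem_sup.1 (proj_mem_adjoin_sup (A := T.toCDGA)
          (fun j => (hGV j).trans (T.V_le j))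
          (fun j hj0 => eq_bot_iff.2 ((hGV j).trans (T.V_nonpos j hj0).le))
          (Algebra.adjoin_mono hfiltG (T.d_filt_succ r x hx)) (n + 1))
        have hw0 : w = 0 := by
          refine T.eq_zero_of_add_mem_wedge_two (by omega : 0 < n + 1)
            (Algebra.adjoin_mono (Set.iUnion₂_mono fun j _ => hGV j) hy) (hGV _ hw) ?_
          rw [hyw, proj_d]
          exact T.minimal _ (Submodule.mem_iSup_of_mem n (hfiltV _ x hx n))
        rw [← proj_d, ← hyw, hw0, add_zero]
        exact Algebra.adjoin_mono (Set.iUnion₂_subset hGp) hy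
    intro v hv
    obtain ⟨r, hr⟩ := (Submodule.mem_iSup_of_directed _ T.filt_mono.directed_le).1
      (T.filt_exhausts (Submodule.mem_iSup_of_mem n hv))
    have h := hfilt r v hr
    rwa [proj_of_mem (A := T.toCDGA) (T.V_le n hv)] at h
  have hV : ∀ N : ℕ, ∀ n : ℤ, n ≤ N → T.V n ≤ p.domain := by
    intro N
    induction N with
    | zero => exact fun n hn => (T.V_nonpos n (by simpa using hn)).le.trans bot_le
    | succ N ih =>
      intro n hn
      by_cases hn0 : n ≤ 0
      · exact (T.V_nonpos n hn0).le.trans bot_le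
      · exact hstep n (by omega) fun j hj => ih j (by push_cast at hn; omega)
  have hVtot : (⨆ k, T.V k) ≤ p.domain := iSup_le fun k => hV k.toNat k (Int.self_le_toNat k)
  have htop : ∀ t, t ∈ Algebra.adjoin ℚ (p.domain : Set T.carrier) := fun t =>
    Algebra.adjoin_mono hVtot (T.gen ▸ Algebra.mem_top)
  obtain ⟨ψ, hψ, hψp⟩ := T.exists_gradedHom p hp.domain_le hp.mem_grading
  exact ⟨⟨ψ.toRingHom, fun q x => map_smul ψ q x, hψ,
    fun x => (hp.adjoin_le_dEqualizer hψ hψp (htop x)).symm⟩,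
    fun t => hp.right_inv_of_mem_adjoin hψp (htop t)⟩

end Lifting

/-! ## STATEMENT 1

Every quasi-isomorphism between minimal Sullivan algebras is an isomorphism of
cdga's. -/
theorem statement_1 (S T : MinimalSullivanAlgebra)
    (φ : CDGA.Hom S.toCDGA T.toCDGA) (h : CDGA.QuasiIso φ) :
    CDGA.IsIso φ := by
  obtain ⟨ψ, hφψ⟩ := T.exists_section φ h
  obtain ⟨χ, hψχ⟩ := S.exists_section ψ (h.of_rightInverse hφψ)
  refine ⟨ψ, fun x => ?_, hφψ⟩
  rw [← hψχ x, hφψ]
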